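/- arXiv:1108.4499 — 3 statements merged into one kernel-verified Lean document; each statement's English description precedes it below -/
import Mathlib

section
/- Between consecutive sampling instants, the function R(t)=½(|z(t)|²+w²(t)) along the high-gain sampled-data observer satisfies Ṙ(t) ≤ 2ωR(t) + ½u²(t−r−τ) for almost all t∈[τᵢ,τ_{i+1}) and all i∈ℤ⁺, where ω := ½·max(L(n+1)+2+2n·max_{i=1,…,n}(θ^{2i}pᵢ²), 1+L²). Equivalently, as a pointwise algebraic inequality: for all z∈ℝⁿ, w∈ℝ and v∈ℝ, Σ_{i=1}^{n−1} zᵢ(fᵢ(z₁,…,zᵢ)+z_{i+1}+θⁱpᵢ(z₁−w)) + zₙ(fₙ(z)+θⁿpₙ(z₁−w)+v) + w(f₁(z₁)+z₂) ≤ ω(|z|²+w²) + ½v². -/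
/-!
Write `S = |z|²`, `M = max θ^{2i} pᵢ²`. It suffices to use the first entry of the maximum, so that
`ω ≥ L(n+1)/2 + 1 + nM`; the left side splits into three groups, one for each summand.

* The Lipschitz terms `∑ zᵢ fᵢ + w f₁` are at most `L(n+1)/2 (S + w²)`. Triangularity gives
  `|f₁| ≤ L|z₁|`; for `i ≥ 2` the bound `|zᵢ||z| ≤ ¾zᵢ² + ⅓S` leaves just enough room in the
  coefficient of `z₁²` to absorb `|w||z₁| ≤ (3/2)w² + z₁²/6` (`lipschitz_part`).
* The chain terms satisfy `∑ zᵢ z_{i+1} ≤ S - z₁²/2 - (z₁ - z₂)²/2 + v²/2` (`chain_bound`), hence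
  together with `w z₂` they are at most
  `S + w² + v²/2 - (z₁ - z₂/2)² - (w - z₂/2)² ≤ S + w² + v²/2 - (z₁ - w)²/2`.
* The leftover `-(z₁ - w)²/2` absorbs the gain terms: `(z₁ - w) ∑ θⁱpᵢzᵢ ≤ (z₁ - w)²/2 + nMS/2`
  by Young and Cauchy–Schwarz (`gain_bound`).
-/

open MeasureTheory Set Matrix

/-- Euclidean norm of a vector in `ℝⁿ`. -/
noncomputable def enorm' {n : ℕ} (x : Fin n → ℝ) : ℝ := Real.sqrt (∑ i, (x i)^2)

lemma enorm'_sq {n : ℕ} (x : Fin n → ℝ) : (enorm' x) ^ 2 = ∑ i, (x i) ^ 2 :=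
  Real.sq_sqrt (Finset.sum_nonneg fun i _ => sq_nonneg (x i))

/-- The telescoping identity `2∑ yᵢyᵢ₊₁ = 2∑ yᵢ² - y₀² + yₙ² - ∑ (yᵢ - yᵢ₊₁)²`, with only the
first square kept. -/
lemma chain_nat (n : ℕ) (hn : 0 < n) (y : ℕ → ℝ) :
    ∑ i ∈ Finset.range n, y i * y (i + 1)
      ≤ ∑ i ∈ Finset.range n, (y i) ^ 2 - (y 0) ^ 2 / 2 - (y 0 - y 1) ^ 2 / 2 + (y n) ^ 2 / 2 := by
  induction n, hn using Nat.le_induction with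
  | base => simp; nlinarith
  | succ k hk ih =>
    rw [Finset.sum_range_succ, Finset.sum_range_succ]
    nlinarith [sq_nonneg (y k - y (k + 1))]

lemma chain_bound (n : ℕ) (h0 : 0 < n) (h1 : 1 < n) (z : Fin n → ℝ) (v : ℝ) :
    ∑ i : Fin n, z i * (if hh : (i : ℕ) + 1 < n then z ⟨(i : ℕ) + 1, hh⟩ else v)
      ≤ ∑ i, (z i) ^ 2 - (z ⟨0, h0⟩) ^ 2 / 2
        - (z ⟨0, h0⟩ - z ⟨1, h1⟩) ^ 2 / 2 + v ^ 2 / 2 := by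
  -- The coordinates of `z`, continued by `v` from index `n` on.
  let y : ℕ → ℝ := fun k => if h : k < n then z ⟨k, h⟩ else v
  have h := chain_nat n h0 y
  rw [← Fin.sum_univ_eq_sum_range (fun i => y i * y (i + 1)),
    ← Fin.sum_univ_eq_sum_range (fun i => (y i) ^ 2)] at h
  simpa [y, h0, h1] using h

lemma gain_bound (n : ℕ) (θ : ℝ) (p z : Fin n → ℝ) (d : ℝ) :
    ∑ i : Fin n, z i * (θ ^ ((i : ℕ) + 1) * p i * d)
      ≤ d ^ 2 / 2
        + (n : ℝ) * (⨆ i : Fin n, θ ^ (2 * ((i : ℕ) + 1)) * (p i) ^ 2) * (∑ i, (z i) ^ 2) / 2 := by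
  have hcs := Finset.sum_mul_sq_le_sq_mul_sq Finset.univ
    (fun i : Fin n => θ ^ ((i : ℕ) + 1) * p i) z
  have hM : ∑ i : Fin n, (θ ^ ((i : ℕ) + 1) * p i) ^ 2
      ≤ (n : ℝ) * (⨆ i : Fin n, θ ^ (2 * ((i : ℕ) + 1)) * (p i) ^ 2) := by
    have := Finset.sum_le_card_nsmul Finset.univ
      (fun i : Fin n => (θ ^ ((i : ℕ) + 1) * p i) ^ 2)
      (⨆ i : Fin n, θ ^ (2 * ((i : ℕ) + 1)) * (p i) ^ 2) (fun i _ => by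
        have := le_ciSup (f := fun i : Fin n => θ ^ (2 * ((i : ℕ) + 1)) * (p i) ^ 2)
          (Set.finite_range _).bddAbove i
        refine le_trans (le_of_eq ?_) this
        ring)
    simpa using this
  have hS : 0 ≤ ∑ i, (z i) ^ 2 := Finset.sum_nonneg fun i _ => sq_nonneg (z i)
  have hmul := mul_le_mul_of_nonneg_right hM hS
  have hsum : ∑ i : Fin n, z i * (θ ^ ((i : ℕ) + 1) * p i * d)
      = d * ∑ i : Fin n, θ ^ ((i : ℕ) + 1) * p i * z i := by
    rw [Finset.mul_sum]
    exact Finset.sum_congr rfl fun i _ => by ring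
  rw [hsum]
  nlinarith [sq_nonneg (d - ∑ i : Fin n, θ ^ ((i : ℕ) + 1) * p i * z i)]

/-- The Lipschitz terms, with `a = f(z)`: the first component is controlled by `|z₁|` and the others
by the full norm `|z|`. -/
lemma lipschitz_part (n : ℕ) (hn : 2 ≤ n) (h0 : 0 < n) (L : ℝ) (hL : 0 ≤ L) (a z : Fin n → ℝ) (w : ℝ)
    (ha : ∀ i, |a i| ≤ L * enorm' z) (ha0 : |a ⟨0, h0⟩| ≤ L * |z ⟨0, h0⟩|) :
    ∑ i, z i * a i + w * a ⟨0, h0⟩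
      ≤ L * ((n : ℝ) + 1) / 2 * (∑ i, (z i) ^ 2 + w ^ 2) := by
  obtain ⟨m, rfl⟩ : ∃ m, n = m + 2 := ⟨n - 2, by omega⟩
  change |a 0| ≤ L * |z 0| at ha0
  change ∑ i, z i * a i + w * a 0 ≤ _
  have hSq := enorm'_sq z
  have hmul : ∀ x y c : ℝ, |y| ≤ L * c → x * y ≤ L * (|x| * c) := fun x y c h => by
    calc x * y ≤ |x| * |y| := by rw [← abs_mul]; exact le_abs_self _
      _ ≤ |x| * (L * c) := by gcongr
      _ = L * (|x| * c) := by ring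
  have h00 := hmul (z 0) (a 0) _ ha0
  have hw0 := hmul w (a 0) _ ha0
  have htail : ∑ i : Fin (m + 1), z i.succ * a i.succ
      ≤ ∑ i : Fin (m + 1), L * (3 / 4 * (z i.succ) ^ 2 + 1 / 3 * enorm' z ^ 2) := by
    refine Finset.sum_le_sum fun i _ => (hmul _ _ _ (ha i.succ)).trans ?_
    refine mul_le_mul_of_nonneg_left ?_ hL
    nlinarith [sq_nonneg (3 * |z i.succ| - 2 * enorm' z), sq_abs (z i.succ)]
  have htail' : ∑ i : Fin (m + 1), L * (3 / 4 * (z i.succ) ^ 2 + 1 / 3 * enorm' z ^ 2)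
      = L * (3 / 4 * ∑ i : Fin (m + 1), (z i.succ) ^ 2 + ((m : ℝ) + 1) / 3 * enorm' z ^ 2) := by
    rw [← Finset.mul_sum, Finset.sum_add_distrib, ← Finset.mul_sum]
    simp
    ring_nf
    simp
  have hsplit : ∑ i, (z i) ^ 2 = z 0 ^ 2 + ∑ i : Fin (m + 1), (z i.succ) ^ 2 :=
    Fin.sum_univ_succ _
  rw [htail', hSq, hsplit] at htail
  rw [hsplit, Fin.sum_univ_succ]
  have hT : 0 ≤ ∑ i : Fin (m + 1), (z i.succ) ^ 2 := Finset.sum_nonneg fun i _ => sq_nonneg _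
  set T := ∑ i : Fin (m + 1), (z i.succ) ^ 2
  have hm : (0 : ℝ) ≤ m := Nat.cast_nonneg m
  have key : |z 0| * |z 0| + |w| * |z 0| + (3 / 4 * T + ((m : ℝ) + 1) / 3 * (z 0 ^ 2 + T))
      ≤ ((m : ℝ) + 3) / 2 * (z 0 ^ 2 + T + w ^ 2) := by
    have hyoung : |w| * |z 0| ≤ 3 / 2 * w ^ 2 + z 0 ^ 2 / 6 := by
      nlinarith [sq_nonneg (3 * |w| - |z 0|), sq_abs w, sq_abs (z 0)]
    have hz : |z 0| * |z 0| = z 0 ^ 2 := by rw [← sq, sq_abs]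
    nlinarith [mul_nonneg hm hT, mul_nonneg hm (sq_nonneg (z 0)), mul_nonneg hm (sq_nonneg w)]
  have hkey := mul_le_mul_of_nonneg_left key hL
  push_cast
  linarith

/-- Between consecutive sampling instants,
`R(t) = ½(|z(t)|² + w²(t))` along the high-gain sampled-data observer satisfies
`Ṙ ≤ 2ωR + ½u²(t-r-τ)`; equivalently, as a pointwise algebraic inequality:
for all `z ∈ ℝⁿ`, `w, v ∈ ℝ`,
`Σ_{i=1}^{n-1} zᵢ(fᵢ(z₁,…,zᵢ) + z_{i+1} + θⁱpᵢ(z₁ - w))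
 + zₙ(fₙ(z) + θⁿpₙ(z₁ - w) + v) + w(f₁(z₁) + z₂) ≤ ω(|z|² + w²) + ½v²`,
where `ω = ½ max(L(n+1)+2+2n·max_{i=1,…,n}(θ^{2i}pᵢ²), 1+L²)`. -/
theorem stmt10 (n : ℕ) (hn : 2 ≤ n) (L θ : ℝ) (hL : 0 ≤ L) (hθ : 1 ≤ θ)
    (p : Fin n → ℝ)
    (f : Fin n → (Fin n → ℝ) → ℝ)
    (hf0 : ∀ i, f i (fun _ => 0) = 0)
    (hfLip : ∀ (i : Fin n) (x z : Fin n → ℝ), |f i x - f i z| ≤ L * enorm' (x - z))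
    (hfTri : ∀ (i : Fin n) (x z : Fin n → ℝ),
      (∀ j : Fin n, j ≤ i → x j = z j) → f i x = f i z) :
    ∀ (z : Fin n → ℝ) (w v : ℝ),
      (∑ i : Fin n, z i * (f i z + (if hh : (i:ℕ)+1 < n then z ⟨(i:ℕ)+1, hh⟩ else v)
          + θ^((i:ℕ)+1) * p i * (z ⟨0, by omega⟩ - w)))
        + w * (f ⟨0, by omega⟩ z + z ⟨1, by omega⟩)
      ≤ ((1:ℝ)/2 * max (L*((n:ℝ)+1)+2+2*(n:ℝ)*(⨆ i : Fin n, θ^(2*((i:ℕ)+1)) * (p i)^2))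
            (1+L^2)) * ((enorm' z)^2 + w^2) + v^2/2 := by
  intro z w v
  have hz0 : ∀ i, |f i z| ≤ L * enorm' z := fun i => by
    have h := hfLip i z (fun _ => 0)
    rw [hf0, sub_zero] at h
    have e : z - (fun _ => (0 : ℝ)) = z := by ext j; simp
    rwa [e] at h
  -- `f₁` depends on `z₁` only, so `z` may be replaced by `(z₁, 0, …, 0)`.
  have hz1 : |f ⟨0, by omega⟩ z| ≤ L * |z ⟨0, by omega⟩| := by
    let x : Fin n → ℝ := Pi.single ⟨0, by omega⟩ (z ⟨0, by omega⟩)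
    have hx : f ⟨0, by omega⟩ z = f ⟨0, by omega⟩ x := by
      refine hfTri _ _ _ fun j hj => ?_
      have : j = ⟨0, by omega⟩ := by
        apply Fin.ext
        have : (j : ℕ) ≤ 0 := hj
        simpa using this
      rw [this]
      simp [x]
    have h := hfLip ⟨0, by omega⟩ x (fun _ => 0)
    rw [hf0, sub_zero] at h
    have e : x - (fun _ => (0 : ℝ)) = x := by ext j; simp
    have hnorm : enorm' x = |z ⟨0, by omega⟩| := by
      rw [enorm', Finset.sum_eq_single (⟨0, by omega⟩ : Fin n)]
      · simp [x, Real.sqrt_sq_eq_abs]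
      · intro j _ hj
        simp [x, Pi.single_eq_of_ne hj]
      · simp
    rw [hx, ← hnorm]
    rwa [e] at h
  have hA := lipschitz_part n hn (by omega) L hL (fun i => f i z) z w hz0 hz1
  have hB := chain_bound n (by omega) (by omega) z v
  have hC := gain_bound n θ p z (z ⟨0, by omega⟩ - w)
  have hM : 0 ≤ ⨆ i : Fin n, θ ^ (2 * ((i : ℕ) + 1)) * (p i) ^ 2 :=
    Real.iSup_nonneg fun i => by positivity
  have hS : 0 ≤ ∑ i, (z i) ^ 2 := Finset.sum_nonneg fun i _ => sq_nonneg (z i)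
  rw [enorm'_sq]
  simp only [mul_add (z _), Finset.sum_add_distrib]
  set M := ⨆ i : Fin n, θ ^ (2 * ((i : ℕ) + 1)) * (p i) ^ 2
  set S := ∑ i, (z i) ^ 2
  have hω := mul_le_mul_of_nonneg_right
    (le_max_left (L * ((n : ℝ) + 1) + 2 + 2 * (n : ℝ) * M) (1 + L ^ 2))
    (add_nonneg hS (sq_nonneg w))
  have hnM : 0 ≤ (n : ℝ) * M := by positivity
  have hnMS := mul_nonneg hnM hS
  have hnMw := mul_nonneg hnM (sq_nonneg w)
  set z1 := z ⟨0, by omega⟩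
  set z2 := z ⟨1, by omega⟩
  have hsq : 0 ≤ (z1 + w - z2) ^ 2 := sq_nonneg _
  linarith
end

section
/- Let P∈ℝ^{n×n} be symmetric positive definite with K₁|x|²≤x'Px≤K₂|x|² for all x∈ℝⁿ (0<K₁≤K₂), let μ,γ>0, b∈ℝⁿ, and let x:[0,∞)→ℝⁿ be locally absolutely continuous and w,d locally bounded measurable signals such that V(t):=x'(t)Px(t) satisfies V̇(t) ≤ −2μV(t) + (b'Pb/(2μ))·w²(t) + 2γ|d(t)|² for almost all t≥0. Then for every σ with 0<σ≤μ/2 and all t>0: |x(t)| ≤ √(K₂/K₁)·e^{−σt}|x(0)| + (1/μ)√(b'Pb/(2K₁))·sup_{0≤s<t}(e^{−σ(t−s)}|w(s)|) + √(2γ/(μK₁))·sup_{0≤s<t}(e^{−σ(t−s)}|d(s)|). -/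
/-!
Write `V = x'Px`, fix the final time `t`, and let `S_w`, `S_d` be the two weighted suprema. On
`[0, t)` one has `|w s| ≤ e^{σ(t-s)} S_w` and `|d s| ≤ e^{σ(t-s)} S_d`, so the dissipation inequality
becomes `V̇ ≤ -2μV + C e^{2σ(t-s)}` with `C = (b'Pb/(2μ)) S_w² + 2γ S_d²`. The function
`y s = e^{-2μs} V(0) + (C/μ) e^{2σ(t-s)}` is a supersolution of this inequality, because
`2σ ≤ μ` gives `2(μ-σ)/μ ≥ 1`. Comparison (`le_supersolution`) yields
`V(t) ≤ y(t) = e^{-2μt} V(0) + C/μ`, and the claim follows from the bounds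
`K₁|x|² ≤ V ≤ K₂|x|²` together with subadditivity of the square root.
-/

open MeasureTheory Set Matrix

/-- If `z` is continuous with `z 0 ≤ 0`, and `z` cannot grow up to the time `T` along an interval
on which it is nonnegative, then `z T ≤ 0`: apply the hypothesis from the last time in `[0, T]` at which `z ≤ 0`. -/
lemma nonpos_of_no_growth {z : ℝ → ℝ} {T : ℝ} (hT : 0 ≤ T) (hz : Continuous z) (h0 : z 0 ≤ 0)
    (h : ∀ a, 0 ≤ a → a ≤ T → (∀ s ∈ Ioo a T, 0 ≤ z s) → z T ≤ z a) : z T ≤ 0 := by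
  have hcpt : IsCompact (Icc 0 T ∩ z ⁻¹' Iic 0) :=
    isCompact_Icc.inter_right (isClosed_Iic.preimage hz)
  obtain ⟨a, ha⟩ := hcpt.exists_isGreatest ⟨0, ⟨le_refl _, hT⟩, h0⟩
  refine (h a ha.1.1.1 ha.1.1.2 fun s hs => ?_).trans ha.1.2
  by_contra hneg
  have := ha.2 ⟨⟨ha.1.1.1.trans hs.1.le, hs.2.le⟩, (not_le.1 hneg).le⟩
  exact absurd hs.1 (not_lt.2 this)

/-- Comparison of an absolutely continuous subsolution of `V̇ = -2μV + C e^{2σ(T-s)}` with the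
supersolution `s ↦ e^{-2μs} V(0) + (C/μ) e^{2σ(T-s)}`, evaluated at the final time `T`. -/
lemma le_supersolution {V V' : ℝ → ℝ} {μ σ C T : ℝ} (hμ : 0 < μ) (hσμ : σ ≤ μ / 2)
    (hC : 0 ≤ C) (hT : 0 ≤ T) (hV : Continuous V)
    (hint : ∀ t, 0 ≤ t → IntervalIntegrable V' volume 0 t)
    (hFTC : ∀ t, 0 ≤ t → V t = V 0 + ∫ s in (0 : ℝ)..t, V' s)
    (hineq : ∀ᵐ s, s ∈ Ioo 0 T → V' s ≤ -2 * μ * V s + C * Real.exp (2 * σ * (T - s))) :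
    V T ≤ Real.exp (-(2 * μ * T)) * V 0 + C / μ := by
  let y : ℝ → ℝ := fun s =>
    Real.exp (-(2 * μ * s)) * V 0 + C / μ * Real.exp (2 * σ * (T - s))
  let y' : ℝ → ℝ := fun s =>
    -(2 * μ) * Real.exp (-(2 * μ * s)) * V 0 - 2 * σ * (C / μ) * Real.exp (2 * σ * (T - s))
  have hy : ∀ s, HasDerivAt y (y' s) s := by
    intro s
    have h1 : HasDerivAt (fun s => -(2 * μ * s)) (-(2 * μ)) s := by
      simpa using (hasDerivAt_id s).const_mul (2 * μ) |>.fun_neg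
    have h2 : HasDerivAt (fun s => 2 * σ * (T - s)) (-(2 * σ)) s := by
      simpa using ((hasDerivAt_id s).const_sub T).const_mul (2 * σ)
    refine ((h1.exp.mul_const (V 0)).add (h2.exp.const_mul (C / μ))).congr_deriv ?_
    simp only [y']
    ring
  have hyc : Continuous y := by fun_prop
  have hy'c : Continuous y' := by fun_prop
  have hsuper : ∀ s, -2 * μ * y s + C * Real.exp (2 * σ * (T - s)) ≤ y' s := by
    intro s
    have h1 : C ≤ (2 * μ - 2 * σ) * (C / μ) := by
      have h2 : C = μ * (C / μ) := by field_simp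
      have h3 : 0 ≤ C / μ := by positivity
      nlinarith
    have h4 := mul_le_mul_of_nonneg_right h1 (Real.exp_pos (2 * σ * (T - s))).le
    simp only [y, y']
    nlinarith
  have key : V T - y T ≤ 0 := by
    refine nonpos_of_no_growth (z := fun s => V s - y s) hT (hV.sub hyc) ?_ ?_
    · have : 0 ≤ C / μ * Real.exp (2 * σ * (T - 0)) := by positivity
      simp only [y, mul_zero, neg_zero, Real.exp_zero]
      linarith
    · intro a ha haT hpos
      have hi : IntervalIntegrable V' volume a T := (hint a ha).symm.trans (hint T hT)
      have hVi : V T - V a = ∫ s in a..T, V' s := by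
        rw [hFTC T hT, hFTC a ha,
          ← intervalIntegral.integral_interval_sub_left (hint T hT) (hint a ha)]
        ring
      have hyi : ∫ s in a..T, y' s = y T - y a :=
        intervalIntegral.integral_eq_sub_of_hasDerivAt (fun s _ => hy s)
          (hy'c.intervalIntegrable _ _)
      have hle : ∫ s in a..T, V' s ≤ ∫ s in a..T, y' s := by
        refine intervalIntegral.integral_mono_ae_restrict haT hi
          (hy'c.intervalIntegrable _ _) ?_
        rw [← restrict_Ioo_eq_restrict_Icc]
        refine (ae_restrict_iff' measurableSet_Ioo).2 ?_
        filter_upwards [hineq] with s hs hsa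
        have h1 := hs ⟨ha.trans_lt hsa.1, hsa.2⟩
        have h2 := hpos s hsa
        have h3 := hsuper s
        nlinarith
      show V T - y T ≤ V a - y a
      linarith
  simp only [y, sub_self, mul_zero, Real.exp_zero, mul_one] at key
  linarith

/-- A locally bounded nonnegative signal is controlled, in square, by its exponentially weighted
supremum over `[0, t)`; local boundedness ensures that the supremum is a genuine one. -/
lemma sq_le_weighted_sSup {f : ℝ → ℝ} {σ t s : ℝ} (hσ : 0 < σ) (hf : ∀ s, 0 ≤ f s)
    (hb : BddAbove (f '' Icc 0 t)) (hs : s ∈ Ico 0 t) :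
    f s ^ 2 ≤ sSup ((fun s => Real.exp (-(σ * (t - s))) * f s) '' Ico 0 t) ^ 2
      * Real.exp (2 * σ * (t - s)) := by
  obtain ⟨M, hM⟩ := hb
  have hbdd : BddAbove ((fun s => Real.exp (-(σ * (t - s))) * f s) '' Ico 0 t) := by
    refine ⟨M, ?_⟩
    rintro _ ⟨r, hr, rfl⟩
    have h1 : Real.exp (-(σ * (t - r))) ≤ 1 :=
      Real.exp_le_one_iff.2 (by nlinarith [hr.2])
    exact (mul_le_of_le_one_left (hf r) h1).trans (hM ⟨r, ⟨hr.1, hr.2.le⟩, rfl⟩)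
  have hle := le_csSup hbdd ⟨s, hs, rfl⟩
  set S := sSup ((fun s => Real.exp (-(σ * (t - s))) * f s) '' Ico 0 t)
  have h2 : f s = Real.exp (-(σ * (t - s))) * f s * Real.exp (σ * (t - s)) := by
    rw [mul_right_comm, ← Real.exp_add]
    simp
  have h3 : f s ≤ S * Real.exp (σ * (t - s)) := by
    rw [h2]
    exact mul_le_mul_of_nonneg_right hle (Real.exp_pos _).le
  have h4 : Real.exp (2 * σ * (t - s)) = Real.exp (σ * (t - s)) ^ 2 := by
    rw [← Real.exp_nat_mul]
    congr 1
    push_cast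
    ring
  rw [h4, ← mul_pow]
  exact pow_le_pow_left₀ (hf s) h3 2

/-- Let `P` be symmetric positive definite with
`K₁|x|² ≤ x'Px ≤ K₂|x|²` (`0 < K₁ ≤ K₂`), let `μ, γ > 0`, `b ∈ ℝⁿ`, and let
`x` be locally absolutely continuous (formalized via the fundamental theorem of
calculus with an integrable a.e. derivative `V'` of `V(t) = x'(t)Px(t)`) and
`w, d` locally bounded measurable signals such that
`V̇ ≤ -2μV + (b'Pb/(2μ))w² + 2γ|d|²` a.e.  Then for every `0 < σ ≤ μ/2` and all
`t > 0`:
`|x(t)| ≤ √(K₂/K₁) e^{-σt}|x(0)| + (1/μ)√(b'Pb/(2K₁)) sup_{0≤s<t}(e^{-σ(t-s)}|w(s)|)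
         + √(2γ/(μK₁)) sup_{0≤s<t}(e^{-σ(t-s)}|d(s)|)`. -/
theorem stmt15 (n : ℕ) (hn : 1 ≤ n)
    (P : Matrix (Fin n) (Fin n) ℝ) (hP : P.PosDef)
    (K₁ K₂ μ γ : ℝ) (hK₁ : 0 < K₁) (hK12 : K₁ ≤ K₂) (hμ : 0 < μ) (hγ : 0 < γ)
    (hPlow : ∀ x : Fin n → ℝ, K₁*(enorm' x)^2 ≤ x ⬝ᵥ P.mulVec x)
    (hPup : ∀ x : Fin n → ℝ, x ⬝ᵥ P.mulVec x ≤ K₂*(enorm' x)^2)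
    (b : Fin n → ℝ)
    (x : ℝ → Fin n → ℝ) (w : ℝ → ℝ) (d : ℝ → Fin n → ℝ)
    (hxc : Continuous x)
    (hwm : Measurable w) (hwb : ∀ R : ℝ, BddAbove ((fun s => |w s|) '' Set.Icc 0 R))
    (hdm : Measurable d) (hdb : ∀ R : ℝ, BddAbove ((fun s => enorm' (d s)) '' Set.Icc 0 R))
    (V' : ℝ → ℝ)
    (hV'int : ∀ t : ℝ, 0 ≤ t → IntervalIntegrable V' MeasureTheory.volume 0 t)
    (hFTC : ∀ t : ℝ, 0 ≤ t →
      x t ⬝ᵥ P.mulVec (x t) = x 0 ⬝ᵥ P.mulVec (x 0) + ∫ s in (0:ℝ)..t, V' s)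
    (hineq : ∀ᵐ s : ℝ ∂MeasureTheory.volume, s ∈ Set.Ioi (0:ℝ) →
      V' s ≤ -2*μ*(x s ⬝ᵥ P.mulVec (x s)) + (b ⬝ᵥ P.mulVec b)/(2*μ)*(w s)^2
        + 2*γ*(enorm' (d s))^2) :
    ∀ σ : ℝ, 0 < σ → σ ≤ μ/2 → ∀ t : ℝ, 0 < t →
      enorm' (x t)
        ≤ Real.sqrt (K₂/K₁) * Real.exp (-(σ*t)) * enorm' (x 0)
          + 1/μ * Real.sqrt ((b ⬝ᵥ P.mulVec b)/(2*K₁))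
            * sSup ((fun s => Real.exp (-(σ*(t-s))) * |w s|) '' Set.Ico 0 t)
          + Real.sqrt (2*γ/(μ*K₁))
            * sSup ((fun s => Real.exp (-(σ*(t-s))) * enorm' (d s)) '' Set.Ico 0 t) := by
  intro σ hσ hσμ t ht
  have hnn : ∀ v : Fin n → ℝ, 0 ≤ enorm' v := fun v => Real.sqrt_nonneg _
  have hB : 0 ≤ b ⬝ᵥ P.mulVec b := (by positivity : 0 ≤ K₁ * enorm' b ^ 2).trans (hPlow b)
  have hwle := fun s (hs : s ∈ Ico 0 t) =>
    sq_le_weighted_sSup (f := fun s => |w s|) hσ (fun s => abs_nonneg _) (hwb t) hs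
  have hdle := fun s (hs : s ∈ Ico 0 t) =>
    sq_le_weighted_sSup (f := fun s => enorm' (d s)) hσ (fun s => hnn _) (hdb t) hs
  have hSw : 0 ≤ sSup ((fun s => Real.exp (-(σ*(t-s))) * |w s|) '' Set.Ico 0 t) := by
    refine Real.sSup_nonneg ?_
    rintro _ ⟨s, -, rfl⟩
    positivity
  have hSd : 0 ≤ sSup ((fun s => Real.exp (-(σ*(t-s))) * enorm' (d s)) '' Set.Ico 0 t) := by
    refine Real.sSup_nonneg ?_
    rintro _ ⟨s, -, rfl⟩
    exact mul_nonneg (Real.exp_pos _).le (hnn _)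
  set Sw := sSup ((fun s => Real.exp (-(σ*(t-s))) * |w s|) '' Set.Ico 0 t)
  set Sd := sSup ((fun s => Real.exp (-(σ*(t-s))) * enorm' (d s)) '' Set.Ico 0 t)
  set B := b ⬝ᵥ P.mulVec b
  have hVc : Continuous fun s => x s ⬝ᵥ P.mulVec (x s) :=
    hxc.dotProduct (continuous_const.matrix_mulVec hxc)
  have hV := le_supersolution (V := fun s => x s ⬝ᵥ P.mulVec (x s)) (T := t) (σ := σ)
    (C := B / (2 * μ) * Sw ^ 2 + 2 * γ * Sd ^ 2) hμ hσμ (by positivity) ht.le hVc hV'int hFTC (by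
      filter_upwards [hineq] with s hs hst
      have h1 := hs hst.1
      have h2 := mul_le_mul_of_nonneg_left (hwle s ⟨hst.1.le, hst.2⟩)
        (by positivity : 0 ≤ B / (2 * μ))
      have h3 := mul_le_mul_of_nonneg_left (hdle s ⟨hst.1.le, hst.2⟩)
        (by positivity : 0 ≤ 2 * γ)
      rw [sq_abs] at h2
      linarith)
  have hK₂ : 0 < K₂ := hK₁.trans_le hK12
  -- The three terms of the bound, `p`, `q` and `r`, have squares adding up to a bound on `|x t|²`.
  have hp : 0 ≤ Real.sqrt (K₂/K₁) * Real.exp (-(σ*t)) * enorm' (x 0) :=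
    mul_nonneg (by positivity) (hnn _)
  have hq : 0 ≤ 1/μ * Real.sqrt (B/(2*K₁)) * Sw := by positivity
  have hr : 0 ≤ Real.sqrt (2*γ/(μ*K₁)) * Sd := by positivity
  have hp2 : K₁ * (Real.sqrt (K₂/K₁) * Real.exp (-(σ*t)) * enorm' (x 0)) ^ 2
      = Real.exp (-(σ*t)) ^ 2 * (K₂ * enorm' (x 0) ^ 2) := by
    rw [mul_pow, mul_pow, Real.sq_sqrt (by positivity)]
    field_simp
  have hq2 : K₁ * (1/μ * Real.sqrt (B/(2*K₁)) * Sw) ^ 2 = B / (2 * μ) * Sw ^ 2 / μ := by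
    rw [mul_pow, mul_pow, Real.sq_sqrt (by positivity)]
    field_simp
  have hr2 : K₁ * (Real.sqrt (2*γ/(μ*K₁)) * Sd) ^ 2 = 2 * γ * Sd ^ 2 / μ := by
    rw [mul_pow, Real.sq_sqrt (by positivity)]
    field_simp
  set p := Real.sqrt (K₂/K₁) * Real.exp (-(σ*t)) * enorm' (x 0)
  set q := 1/μ * Real.sqrt (B/(2*K₁)) * Sw
  set r := Real.sqrt (2*γ/(μ*K₁)) * Sd
  have hexp : Real.exp (-(2 * μ * t)) ≤ Real.exp (-(σ*t)) ^ 2 := by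
    rw [← Real.exp_nat_mul]
    refine Real.exp_le_exp.2 ?_
    push_cast
    nlinarith
  have h0 : Real.exp (-(2 * μ * t)) * (x 0 ⬝ᵥ P.mulVec (x 0)) ≤ K₁ * p ^ 2 := by
    rw [hp2]
    calc _ ≤ Real.exp (-(2 * μ * t)) * (K₂ * enorm' (x 0) ^ 2) :=
          mul_le_mul_of_nonneg_left (hPup _) (Real.exp_pos _).le
      _ ≤ _ := mul_le_mul_of_nonneg_right hexp (by positivity)
  have hsum : K₁ * enorm' (x t) ^ 2 ≤ K₁ * (p ^ 2 + q ^ 2 + r ^ 2) := by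
    have := hPlow (x t)
    rw [add_div] at hV
    linarith
  have hsq := le_of_mul_le_mul_left hsum hK₁
  refine abs_le_of_sq_le_sq' ?_ (by positivity) |>.2
  nlinarith [mul_nonneg hp hq, mul_nonneg hp hr, mul_nonneg hq hr]
end

section
/- Let P∈ℝ^{n×n} be symmetric positive definite, μ,γ>0, k∈ℝⁿ, and suppose the dissipation inequality x'P(A+bk')x + x'Pf(x) + x'P diag(g₁(x,u),…,gₙ(x,u))d ≤ −2μ x'Px + γ|d|² holds for all (x,d,u)∈ℝⁿ×ℝⁿ×ℝ. Then for all x,d∈ℝⁿ and v,u∈ℝ: 2x'P(Ax + f(x) + diag(g₁(x,u),…,gₙ(x,u))d + bv) ≤ −2μ x'Px + (b'Pb/(2μ))·(v−k'x)² + 2γ|d|². Consequently, along any solution of the strict-feedback system, V(t)=x'(t)Px(t) satisfies V̇(t) ≤ −2μV(t) + (b'Pb/(2μ))|u(t−τ)−k'x(t)|² + 2γ|d(t)|² for almost all t≥0. -/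
/-!
Write `w = v - k'x`, so that `Ax + bv = (A + bk')x + bw`. Twice the dissipation inequality bounds
everything except the cross term `2w x'Pb` by `-4μ x'Px + 2γ|d|²`. Positivity of the form `P` at
`2μx - wb` gives `2w x'Pb ≤ 2μ x'Px + (b'Pb/(2μ)) w²` (`two_mul_dotProduct_mulVec_le`), and the sum
of the two bounds is the pointwise inequality.

Since `P` is symmetric, `V = x'Px` has derivative `2x'Pẋ` wherever all coordinates of `x` are
differentiable (`hasDerivAt_quadForm`); along a solution this is the left-hand side of the pointwise
inequality with `v = u(t - τ)`.
-/

open MeasureTheory Set Matrix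

/-- The shift matrix `A` with `a_{i,i+1} = 1` and zeros elsewhere. -/
def Amat (n : ℕ) : Matrix (Fin n) (Fin n) ℝ :=
  Matrix.of fun i j => if (j:ℕ) = (i:ℕ)+1 then 1 else 0

/-- `b = (0,…,0,1)' ∈ ℝⁿ`. -/
def bvec (n : ℕ) : Fin n → ℝ := fun i => if (i:ℕ) = n-1 then 1 else 0

/-- Symmetry of the bilinear form of a real positive definite matrix. -/
lemma dotProduct_mulVec_symm {n : ℕ} {P : Matrix (Fin n) (Fin n) ℝ} (hP : P.PosDef)
    (x y : Fin n → ℝ) : x ⬝ᵥ P.mulVec y = y ⬝ᵥ P.mulVec x := by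
  have hT : Pᵀ = P := by
    have h := hP.isHermitian.eq
    rwa [conjTranspose_eq_transpose_of_trivial] at h
  rw [dotProduct_mulVec, dotProduct_comm, ← mulVec_transpose, hT]

/-- Young's inequality in the form induced by `P`, obtained by evaluating the form at
`2μ x - w b`. -/
lemma two_mul_dotProduct_mulVec_le {n : ℕ} {P : Matrix (Fin n) (Fin n) ℝ} (hP : P.PosDef)
    {μ : ℝ} (hμ : 0 < μ) (x b : Fin n → ℝ) (w : ℝ) :
    2 * (w * (x ⬝ᵥ P.mulVec b))
      ≤ 2 * μ * (x ⬝ᵥ P.mulVec x) + (b ⬝ᵥ P.mulVec b) / (2 * μ) * w ^ 2 := by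
  have h : 0 ≤ ((2 * μ) • x - w • b) ⬝ᵥ P.mulVec ((2 * μ) • x - w • b) := by
    simpa using hP.posSemidef.dotProduct_mulVec_nonneg ((2 * μ) • x - w • b)
  simp only [mulVec_sub, mulVec_smul, sub_dotProduct, dotProduct_sub, smul_dotProduct,
    dotProduct_smul, smul_eq_mul, dotProduct_mulVec_symm hP b x] at h
  have key : 2 * μ * (x ⬝ᵥ P.mulVec x) + (b ⬝ᵥ P.mulVec b) / (2 * μ) * w ^ 2
      - 2 * (w * (x ⬝ᵥ P.mulVec b))
      = (2 * μ * (2 * μ * (x ⬝ᵥ P.mulVec x) - w * (x ⬝ᵥ P.mulVec b))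
        - w * (2 * μ * (x ⬝ᵥ P.mulVec b) - w * (b ⬝ᵥ P.mulVec b))) / (2 * μ) := by
    field_simp
    ring
  have h2 := div_nonneg h (by positivity : (0 : ℝ) ≤ 2 * μ)
  linarith

lemma hasDerivAt_quadForm {n : ℕ} {P : Matrix (Fin n) (Fin n) ℝ} (hP : P.PosDef)
    {x : ℝ → Fin n → ℝ} {y : Fin n → ℝ} {t : ℝ}
    (hx : ∀ i, HasDerivAt (fun s => x s i) (y i) t) :
    HasDerivAt (fun s => x s ⬝ᵥ P.mulVec (x s)) (2 * (x t ⬝ᵥ P.mulVec y)) t := by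
  have hPx : ∀ i, HasDerivAt (fun s => P.mulVec (x s) i) (P.mulVec y i) t := fun i =>
    HasDerivAt.fun_sum (u := Finset.univ) fun j _ => (hx j).const_mul (P i j)
  have h : HasDerivAt (fun s => x s ⬝ᵥ P.mulVec (x s))
      (∑ i, (y i * P.mulVec (x t) i + x t i * P.mulVec y i)) t :=
    HasDerivAt.fun_sum (u := Finset.univ) fun i _ => (hx i).mul (hPx i)
  convert h using 1
  rw [Finset.sum_add_distrib]
  change _ = y ⬝ᵥ P.mulVec (x t) + x t ⬝ᵥ P.mulVec y
  rw [dotProduct_mulVec_symm hP y]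
  ring

/-- The linear part `Ax + bv` in coordinates: the next state in the rows above the last one,
the input `v` in the last row. -/
lemma Amat_mulVec_add_bvec {n : ℕ} (x : Fin n → ℝ) (v : ℝ) (i : Fin n) :
    (Amat n).mulVec x i + bvec n i * v
      = if hh : (i : ℕ) + 1 < n then x ⟨(i : ℕ) + 1, hh⟩ else v := by
  simp only [mulVec, dotProduct, Amat, bvec, of_apply, ite_mul, one_mul, zero_mul]
  by_cases h : (i : ℕ) + 1 < n
  · rw [dif_pos h, if_neg (by omega), add_zero, Finset.sum_eq_single ⟨(i : ℕ) + 1, h⟩]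
    · simp
    · intro j _ hj
      exact if_neg fun e => hj (Fin.ext e)
    · simp
  · rw [dif_neg h, if_pos (by omega), Finset.sum_eq_zero, zero_add]
    intro j _
    exact if_neg (by omega)

/-- If the dissipation inequality
`x'P(A+bk')x + x'Pf(x) + x'P diag(g₁(x,u),…,gₙ(x,u))d ≤ -2μ x'Px + γ|d|²`
holds for all `(x,d,u)`, then for all `x, d ∈ ℝⁿ`, `v, u ∈ ℝ`:
`2x'P(Ax + f(x) + diag(g(x,u))d + bv) ≤ -2μ x'Px + (b'Pb/(2μ))(v-k'x)² + 2γ|d|²`;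
consequently, along any solution of the strict-feedback system,
`V(t) = x'(t)Px(t)` satisfies
`V̇ ≤ -2μV + (b'Pb/(2μ))|u(t-τ) - k'x(t)|² + 2γ|d(t)|²` for a.e. `t ≥ 0`. -/
theorem stmt16 (n : ℕ) (hn : 1 ≤ n) (L G τ : ℝ) (hL : 0 ≤ L) (hG : 0 ≤ G) (hτ : 0 ≤ τ)
    (f : Fin n → (Fin n → ℝ) → ℝ)
    (hf0 : ∀ i, f i (fun _ => 0) = 0)
    (hfLip : ∀ (i : Fin n) (x z : Fin n → ℝ), |f i x - f i z| ≤ L * enorm' (x - z))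
    (hfTri : ∀ (i : Fin n) (x z : Fin n → ℝ),
      (∀ j : Fin n, j ≤ i → x j = z j) → f i x = f i z)
    (g : Fin n → (Fin n → ℝ) → ℝ → ℝ)
    (hgB : ∀ i x v, |g i x v| ≤ G)
    (P : Matrix (Fin n) (Fin n) ℝ) (hP : P.PosDef)
    (μ γ : ℝ) (hμ : 0 < μ) (hγ : 0 < γ) (k : Fin n → ℝ)
    (hdiss : ∀ (x d : Fin n → ℝ) (uu : ℝ),
      x ⬝ᵥ P.mulVec ((Amat n + Matrix.vecMulVec (bvec n) k).mulVec x)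
        + x ⬝ᵥ P.mulVec (fun i => f i x)
        + x ⬝ᵥ P.mulVec (fun i => g i x uu * d i)
      ≤ -2*μ*(x ⬝ᵥ P.mulVec x) + γ*(enorm' d)^2) :
    -- pointwise inequality
    (∀ (x d : Fin n → ℝ) (v uu : ℝ),
      2*(x ⬝ᵥ P.mulVec ((Amat n).mulVec x + (fun i => f i x)
          + (fun i => g i x uu * d i) + (fun i => bvec n i * v)))
        ≤ -2*μ*(x ⬝ᵥ P.mulVec x)
          + (bvec n ⬝ᵥ P.mulVec (bvec n))/(2*μ)*(v - k ⬝ᵥ x)^2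
          + 2*γ*(enorm' d)^2) ∧
    -- consequence along solutions of the strict-feedback system (1.4)
    (∀ (x : ℝ → Fin n → ℝ) (u : ℝ → ℝ) (d : ℝ → Fin n → ℝ),
      ContinuousOn x (Set.Ici 0) →
      (∀ᵐ t : ℝ ∂MeasureTheory.volume, t ∈ Set.Ioi (0:ℝ) → ∀ i : Fin n,
        HasDerivAt (fun s => x s i)
          (f i (x t) + (if hh : (i:ℕ)+1 < n then x t ⟨(i:ℕ)+1, hh⟩ else u (t - τ))
            + g i (x t) (u t) * d t i) t) →
      ∀ᵐ t : ℝ ∂MeasureTheory.volume, t ∈ Set.Ioi (0:ℝ) →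
        ∃ Dv : ℝ, HasDerivAt (fun s => x s ⬝ᵥ P.mulVec (x s)) Dv t ∧
          Dv ≤ -2*μ*(x t ⬝ᵥ P.mulVec (x t))
            + (bvec n ⬝ᵥ P.mulVec (bvec n))/(2*μ)*(u (t-τ) - k ⬝ᵥ x t)^2
            + 2*γ*(enorm' (d t))^2) := by
  have hpt : ∀ (x d : Fin n → ℝ) (v uu : ℝ),
      2*(x ⬝ᵥ P.mulVec ((Amat n).mulVec x + (fun i => f i x)
          + (fun i => g i x uu * d i) + (fun i => bvec n i * v)))
        ≤ -2*μ*(x ⬝ᵥ P.mulVec x)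
          + (bvec n ⬝ᵥ P.mulVec (bvec n))/(2*μ)*(v - k ⬝ᵥ x)^2
          + 2*γ*(enorm' d)^2 := by
    intro x d v uu
    have h1 := hdiss x d uu
    have h2 := two_mul_dotProduct_mulVec_le hP hμ x (bvec n) (v - k ⬝ᵥ x)
    have hbk : (vecMulVec (bvec n) k).mulVec x = (k ⬝ᵥ x) • bvec n := by
      rw [vecMulVec_mulVec, op_smul_eq_smul]
    have hbv : (fun i => bvec n i * v) = v • bvec n := by
      ext i
      simp [mul_comm]
    rw [hbv]
    simp only [add_mulVec, hbk, mulVec_add, mulVec_smul, dotProduct_add, dotProduct_smul,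
      smul_eq_mul] at h1 ⊢
    linarith
  refine ⟨hpt, ?_⟩
  intro x u d _ hx
  filter_upwards [hx] with t ht ht0
  refine ⟨_, hasDerivAt_quadForm hP (y := (Amat n).mulVec (x t) + (fun i => f i (x t))
    + (fun i => g i (x t) (u t) * d t i) + (fun i => bvec n i * u (t - τ))) ?_,
    hpt (x t) (d t) (u (t - τ)) (u t)⟩
  intro i
  convert ht ht0 i using 1
  rw [← Amat_mulVec_add_bvec]
  simp only [Pi.add_apply]
  ring
end
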